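/- arXiv:1112.2118 — 2 statements merged into one kernel-verified Lean document; each statement's English description precedes it below -/
import Mathlib

section
/- Let s ≥ 6 and set A(c) = (Q/2)·c. Then the function c ↦ OPT(A(c), c, s) is strictly decreasing on 0 < c ≤ 1/Q. -/
/-- `q(x) = exp(x) - x - 1`. -/
noncomputable def q (x : ℝ) : ℝ := Real.exp x - x - 1

/-- `Q(x) = x·(exp(x) − 1)/(exp(x) − x − 1)`. -/
noncomputable def Qf (x : ℝ) : ℝ := x * (Real.exp x - 1) / (Real.exp x - x - 1)

/-- `OPT(a,c,s) = (3·q(sa)/q(s) + 1)·(1/(1+ac))^Q·((1+c)^Q + 3·(1−c/3)^Q)` with `Q = Q(s)`. -/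
noncomputable def OPT4 (a c s : ℝ) : ℝ :=
  (3 * q (s*a) / q s + 1) * (1/(1+a*c)) ^ (Qf s) *
  ((1+c) ^ (Qf s) + 3 * (1 - c/3) ^ (Qf s))

lemma aux_q_pos {x : ℝ} (hx : 0 < x) : 0 < q x := by
  unfold q
  have := Real.add_one_lt_exp hx.ne'
  linarith

lemma aux_Q_ge (s : ℝ) (hs : 6 ≤ s) : 6 ≤ Qf s := by
  have h : 0 < Real.exp s - s - 1 := aux_q_pos (by linarith)
  unfold Qf
  rw [le_div_iff₀ h]
  nlinarith [h]

/-- Bound for the first factor. -/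
lemma aux_first (s a : ℝ) (hs : 6 ≤ s) (ha : 0 ≤ a) (ha2 : a ≤ 1/2) :
    3 * s * (Real.exp (s*a) - 1) ≤ 1.9 * a * q s := by
  have hconv : Real.exp (s*a) - 1 ≤ 2 * a * (Real.exp (s/2) - 1) := by
    have := convexOn_exp.2 (Set.mem_univ (0:ℝ)) (Set.mem_univ (s/2))
      (show (0:ℝ) ≤ 1 - 2*a by linarith) (show (0:ℝ) ≤ 2*a by linarith) (by ring)
    simp only [smul_eq_mul, mul_zero, zero_add, Real.exp_zero, mul_one] at this
    rw [show 2 * a * (s/2) = s * a by ring] at this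
    linarith
  have h3 : (20:ℝ) ≤ Real.exp 3 := by
    have h1 := Real.exp_one_gt_d9
    have : Real.exp 3 = Real.exp 1 ^ 3 := by
      rw [← Real.exp_nat_mul]; norm_num
    rw [this]
    calc (20:ℝ) ≤ 2.718 ^ 3 := by norm_num
      _ ≤ _ := by gcongr; linarith
  set y := Real.exp (s/2) with hy
  have hy1 : 10 * s - 40 ≤ y := by
    have : y = Real.exp 3 * Real.exp ((s-6)/2) := by
      rw [← Real.exp_add, hy]; congr 1; ring
    have h2 := Real.add_one_le_exp ((s-6)/2)
    rw [this]
    nlinarith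
  have hyy : Real.exp s = y * y := by
    rw [hy, ← Real.exp_add]; congr 1; ring
  have key : 6 * s * (y - 1) ≤ 1.9 * q s := by
    unfold q
    rw [hyy]
    nlinarith [mul_nonneg (show (0:ℝ) ≤ y by linarith) (show (0:ℝ) ≤ 1.9 * y - 6 * s by linarith)]
  have hs3 : 0 ≤ 3 * s := by linarith
  nlinarith [mul_le_mul_of_nonneg_left hconv hs3, mul_le_mul_of_nonneg_left key ha]

lemma aux_exp (u : ℝ) (h0 : 0 ≤ u) (h1 : u ≤ 4/3) :
    Real.exp u * (2 - 0.65625 * u) ≤ 2 + 1.96875 * u := by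
  obtain ⟨v, rfl⟩ : ∃ v, u = 2 * v := ⟨u/2, by ring⟩
  have hv0 : 0 ≤ v := by linarith
  have hv1 : v ≤ 2/3 := by linarith
  have hb := Real.exp_bound' hv0 (by linarith) (n := 3) (by norm_num)
  have hb' : Real.exp v ≤ 1 + v + v^2/2 + 2*v^3/9 := by
    simp [Finset.sum_range_succ, Nat.factorial] at hb
    linarith
  have he : Real.exp (2*v) = Real.exp v ^ 2 := by
    rw [← Real.exp_nat_mul]; norm_num
  have h2 : Real.exp (2*v) ≤ (1 + v + v^2/2 + 2*v^3/9)^2 := by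
    rw [he]; gcongr
  have h3 : (1 + v + v^2/2 + 2*v^3/9)^2 ≤ 1 + 2*v + 2*v^2 + (13/9 + 25/36*(2/3) + 2/9*(4/9) + 4/81*(8/27)) *v^3 := by
    have e : (1 + v + v^2/2 + 2*v^3/9)^2 = 1 + 2*v + 2*v^2 + (13/9 + 25/36*v + 2/9*v^2 + 4/81*v^3)*v^3 := by ring
    have h2 : v^2 ≤ 4/9 := by nlinarith
    have h3 : v^3 ≤ 8/27 := by
      calc v^3 ≤ (2/3)^3 := by gcongr
        _ = 8/27 := by norm_num
    rw [e]
    gcongr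
  have h4 : Real.exp (2*v) ≤ 1 + 2*v + 2*v^2 + 2.03*v^3 := by
    have : 0 ≤ v^3 := by positivity
    nlinarith
  have h5 : 0 ≤ 2 - 0.65625 * (2*v) := by linarith
  refine (mul_le_mul_of_nonneg_right h4 h5).trans ?_
  -- remaining polynomial inequality, after dividing by v
  have h6 : 0 ≤ v * (1.25 - 1.375 * v - 1.435 * v^2 + 2.66 * v^3) := by
    apply mul_nonneg hv0
    nlinarith [mul_nonneg hv0 (sq_nonneg (v - 0.6)), sq_nonneg (v - 0.6)]
  nlinarith [h6, pow_nonneg hv0 3, pow_nonneg hv0 4, pow_nonneg hv0 2]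

/-- Bound for the third factor. -/
lemma aux_third (Q c : ℝ) (hQ : 6 ≤ Q) (hc : 0 < c) (hQc : Q * c ≤ 1) :
    (1+c)^(Q-1) - (1-c/3)^(Q-1) ≤ 0.4375 * (Q*c) * ((1+c)^Q + 3 * (1-c/3)^Q) := by
  have hc1 : c ≤ 1/6 := by nlinarith
  have hM : 0 < 1 - c/3 := by linarith
  have hP : 0 < 1 + c := by linarith
  have e1 : (1+c)^Q = (1+c)^(Q-1) * (1+c) := by
    rw [← Real.rpow_add_one hP.ne']; congr 1; ring
  have e2 : (1-c/3)^Q = (1-c/3)^(Q-1) * (1-c/3) := by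
    rw [← Real.rpow_add_one hM.ne']; congr 1; ring
  set X := (1+c)^(Q-1) with hX
  set Y := (1-c/3)^(Q-1) with hY
  have hYpos : 0 < Y := Real.rpow_pos_of_pos hM _
  have hXY : Y ≤ X := Real.rpow_le_rpow hM.le (by linarith) (by linarith)
  set z := (4*c/3)/(1-c/3) with hz
  have hW : X ≤ Y * Real.exp (4/3*(Q*c)) := by
    have h1 : 1 + c ≤ (1-c/3) * Real.exp z := by
      have := Real.add_one_le_exp z
      have h2 : (1-c/3) * (z+1) = 1 + c := by
        have h3 : (1-c/3) * z = 4*c/3 := by rw [hz]; exact mul_div_cancel₀ _ hM.ne'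
        linarith
      nlinarith
    calc X ≤ ((1-c/3) * Real.exp z)^(Q-1) := Real.rpow_le_rpow hP.le h1 (by linarith)
      _ = Y * Real.exp (z*(Q-1)) := by
        rw [Real.mul_rpow hM.le (Real.exp_pos _).le, ← Real.exp_mul]
      _ ≤ _ := by
        refine mul_le_mul_of_nonneg_left (Real.exp_le_exp.2 ?_) hYpos.le
        rw [hz, div_mul_eq_mul_div, div_le_iff₀ hM]
        nlinarith [mul_nonneg hc.le (show 0 ≤ 1 - Q*c by linarith)]
  have hQc0 : 0 < Q * c := by positivity
  have hE := aux_exp (4/3*(Q*c)) (by linarith) (by linarith)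
  set E := Real.exp (4/3*(Q*c))
  rw [e1, e2]
  have hS : X + 3 * Y ≤ X * (1+c) + 3 * (Y * (1-c/3)) := by nlinarith
  have hmain : X - Y ≤ 0.4375 * (Q*c) * (X + 3*Y) := by
    have h1 := mul_le_mul_of_nonneg_right hW (show 0 ≤ 2 - 0.65625*(4/3*(Q*c)) by linarith)
    have h2 := mul_le_mul_of_nonneg_left hE hYpos.le
    nlinarith
  refine hmain.trans ?_
  gcongr

lemma aux_log (s c : ℝ) (hs : 6 ≤ s) (hc : 0 < c) (hQc : Qf s * c ≤ 1) :
    0 < 3 * q (s*(Qf s/2*c)) / q s + 1 ∧ 0 < 1 + Qf s/2*c*c ∧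
    0 < (1+c)^(Qf s) + 3 * (1-c/3)^(Qf s) := by
  have hQ := aux_Q_ge s hs
  have hc1 : c ≤ 1/6 := by nlinarith
  have h1 := aux_q_pos (show 0 < s by linarith)
  have h2 := aux_q_pos (show 0 < s*(Qf s/2*c) by positivity)
  have hM : 0 < 1 - c/3 := by linarith
  refine ⟨by positivity, by positivity, by positivity⟩

lemma aux_deriv (s c : ℝ) (hs : 6 ≤ s) (hc : 0 < c) (hQc : Qf s * c ≤ 1) :
    ∃ d < 0, HasDerivAt (fun c => Real.log (3 * q (s*(Qf s/2*c)) / q s + 1)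
      - Qf s * Real.log (1 + Qf s/2*c*c)
      + Real.log ((1+c)^(Qf s) + 3 * (1-c/3)^(Qf s))) d c := by
  obtain ⟨p1, p2, p3⟩ := aux_log s c hs hc hQc
  have hQ := aux_Q_ge s hs
  have hc1 : c ≤ 1/6 := by nlinarith
  have hq := aux_q_pos (show 0 < s by linarith)
  have hq2 := aux_q_pos (show 0 < s*(Qf s/2*c) by positivity)
  have hM : 0 < 1 - c/3 := by linarith
  have hP : 0 < 1 + c := by linarith
  have hA := aux_first s (Qf s/2*c) hs (by positivity) (by linarith)
  have hC := aux_third (Qf s) c hQ hc hQc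
  set Q := Qf s with hQdef
  have d1 : HasDerivAt (fun c => 3 * q (s*(Q/2*c)) / q s + 1)
      (3 * (Real.exp (s*(Q/2*c)) * (s*(Q/2)) - s*(Q/2)) / q s) c := by
    have hl : HasDerivAt (fun c : ℝ => s*(Q/2*c)) (s*(Q/2)) c := by
      simpa using ((hasDerivAt_id c).const_mul (Q/2)).const_mul s
    have := ((((hl.exp.sub hl).sub_const 1).const_mul 3).div_const (q s)).add_const 1
    exact this
  have d2 : HasDerivAt (fun c => 1 + Q/2*c*c) (Q*c) c := by
    have := (((hasDerivAt_id c).const_mul (Q/2)).mul (hasDerivAt_id c)).const_add 1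
    refine this.congr_deriv ?_
    simp only [id]; ring
  have d3 : HasDerivAt (fun c => (1+c)^Q + 3 * (1-c/3)^Q)
      (Q * ((1+c)^(Q-1) - (1-c/3)^(Q-1))) c := by
    have a1 := ((hasDerivAt_id c).const_add 1).rpow_const (p := Q) (Or.inl hP.ne')
    have a2 := (((hasDerivAt_id c).div_const 3).const_sub 1).rpow_const (p := Q) (Or.inl hM.ne')
    refine (a1.add (a2.const_mul 3)).congr_deriv ?_
    simp only [id]; ring
  refine ⟨_, ?_, ((d1.log p1.ne').sub ((d2.log p2.ne').const_mul Q)).add (d3.log p3.ne')⟩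
  have b1 : 3 * (Real.exp (s*(Q/2*c)) * (s*(Q/2)) - s*(Q/2)) / q s
      / (3 * q (s*(Q/2*c)) / q s + 1) ≤ 0.475 * (Q * (Q*c)) := by
    have hden : 1 ≤ 3 * q (s*(Q/2*c)) / q s + 1 := by
      have : 0 ≤ 3 * q (s*(Q/2*c)) / q s := by positivity
      linarith
    have h0 : 0 ≤ 0.475 * (Q * (Q*c)) := by positivity
    rw [div_le_iff₀ p1]
    refine le_trans ?_ (le_mul_of_one_le_right h0 hden)
    rw [div_le_iff₀ hq]
    nlinarith [mul_le_mul_of_nonneg_left hA (show 0 ≤ Q/2 by linarith)]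
  have b2 : 12/13 * (Q * (Q*c)) ≤ Q * (Q*c / (1 + Q/2*c*c)) := by
    have : Q/2*c*c ≤ 1/12 := by nlinarith
    rw [← mul_div_assoc, le_div_iff₀ p2]
    have h0 : 0 ≤ Q * (Q*c) := by positivity
    nlinarith
  have b3 : Q * ((1+c)^(Q-1) - (1-c/3)^(Q-1)) / ((1+c)^Q + 3 * (1-c/3)^Q)
      ≤ 0.4375 * (Q * (Q*c)) := by
    rw [div_le_iff₀ p3]
    nlinarith [mul_le_mul_of_nonneg_left hC (show 0 ≤ Q by linarith)]
  have h0 : 0 < Q * (Q*c) := by positivity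
  linarith

theorem stmt18 (s : ℝ) (hs : 6 ≤ s) :
    StrictAntiOn (fun c => OPT4 (Qf s / 2 * c) c s) (Set.Ioc (0:ℝ) (1/Qf s)) := by
  have hQ := aux_Q_ge s hs
  have hQ0 : 0 < Qf s := by linarith
  have hmem : ∀ c ∈ Set.Ioc (0:ℝ) (1/Qf s), 0 < c ∧ Qf s * c ≤ 1 := by
    intro c hc
    refine ⟨hc.1, ?_⟩
    have := (le_div_iff₀ hQ0).1 hc.2
    linarith
  have hlog : StrictAntiOn (fun c => Real.log (3 * q (s*(Qf s/2*c)) / q s + 1)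
      - Qf s * Real.log (1 + Qf s/2*c*c)
      + Real.log ((1+c)^(Qf s) + 3 * (1-c/3)^(Qf s))) (Set.Ioc (0:ℝ) (1/Qf s)) := by
    apply strictAntiOn_of_deriv_neg (convex_Ioc _ _)
    · intro c hc
      obtain ⟨d, -, h⟩ := aux_deriv s c hs (hmem c hc).1 (hmem c hc).2
      exact h.continuousAt.continuousWithinAt
    · intro c hc
      have hc := interior_subset hc
      obtain ⟨d, hd, h⟩ := aux_deriv s c hs (hmem c hc).1 (hmem c hc).2
      rw [h.deriv]
      exact hd
  have hexp : ∀ c ∈ Set.Ioc (0:ℝ) (1/Qf s), OPT4 (Qf s / 2 * c) c s =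
      Real.exp (Real.log (3 * q (s*(Qf s/2*c)) / q s + 1)
      - Qf s * Real.log (1 + Qf s/2*c*c)
      + Real.log ((1+c)^(Qf s) + 3 * (1-c/3)^(Qf s))) := by
    intro c hc
    obtain ⟨p1, p2, p3⟩ := aux_log s c hs (hmem c hc).1 (hmem c hc).2
    rw [Real.exp_add, sub_eq_add_neg, Real.exp_add, Real.exp_log p1, Real.exp_log p3]
    unfold OPT4
    congr 2
    rw [Real.rpow_def_of_pos (by positivity), one_div, Real.log_inv]
    congr 1
    ring
  intro x hx y hy hxy
  simp only
  rw [hexp x hx, hexp y hy]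
  exact Real.exp_lt_exp.2 (hlog hx hy hxy)
end

section
/- Let s ≥ 5 and set B(x) = 1 + 3x/(2Q) − 1/(2Q). Then the function c ↦ OPT(1, B(1/c), c, s) is strictly decreasing on c ≥ 3. -/
/-- `OPT(x,y,z,s)` for the domain-size-4 case, with `Q = Q(s)`. -/
noncomputable def OPTL (x y z s : ℝ) : ℝ :=
  (3 * q (s*x) / q s + q (s*y) / q s) * (1/(y + x*z)) ^ (Qf s) *
  ((1+z) ^ (Qf s) + 3 * |1 - z/3| ^ (Qf s))

lemma aux_Q_mul {s : ℝ} (hs : 0 < s) : Qf s * q s = s * (Real.exp s - 1) := by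
  have := aux_q_pos hs
  unfold Qf
  unfold q at *
  field_simp

lemma aux_Q_gt {s : ℝ} (hs : 0 < s) : s < Qf s := by
  have h := aux_q_pos hs
  have h2 := aux_Q_mul hs
  have : s * q s < Qf s * q s := by
    rw [h2]; unfold q; nlinarith
  exact lt_of_mul_lt_mul_right this h.le

lemma aux_conv {x s : ℝ} (hx : 0 ≤ x) (hxs : x ≤ s) (hs : 0 < s) :
    s * (Real.exp x - 1) ≤ x * (Real.exp s - 1) := by
  have h := convexOn_exp.2 (Set.mem_univ (0:ℝ)) (Set.mem_univ s)
    (show 0 ≤ 1 - x / s by rw [sub_nonneg, div_le_one hs]; exact hxs)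
    (show 0 ≤ x / s by positivity) (by ring)
  simp only [smul_eq_mul, mul_zero, zero_add, Real.exp_zero, mul_one] at h
  rw [div_mul_cancel₀ _ hs.ne'] at h
  have h3 := mul_le_mul_of_nonneg_left h hs.le
  have h4 : s * (1 - x / s + x / s * Real.exp s) = s - x + x * Real.exp s := by
    field_simp
  rw [h4] at h3
  linarith

/-- the bound on the first logarithmic derivative -/
lemma aux_A {s c y : ℝ} (hs : 5 ≤ s) (hc : 3 ≤ c)
    (hy : y = 1 - (c - 3) / (2 * Qf s * c)) :
    3 / (2 * c ^ 2) * ((c + 3) / (7 * c + 3)) ≤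
     s * (3 / (2 * Qf s * c ^ 2)) * (Real.exp (s * y) - 1) / q s / (3 + q (s * y) / q s) := by
  have hs0 : 0 < s := by linarith
  have hq := aux_q_pos hs0
  have hQ := aux_Q_gt hs0
  have hQm := aux_Q_mul hs0
  have hQ0 : 0 < Qf s := by linarith
  have hc0 : 0 < c := by linarith
  have hy1 : y ≤ 1 := by
    rw [hy]; have : 0 ≤ (c - 3) / (2 * Qf s * c) := div_nonneg (by linarith) (by positivity)
    linarith
  have hy0 : 0 < y := by
    rw [hy, sub_pos, div_lt_one (by positivity)]
    nlinarith
  have hE : 0 < Real.exp s - 1 := by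
    have := Real.add_one_lt_exp hs0.ne'
    linarith
  have hEs : s + 1 < Real.exp s := Real.add_one_lt_exp hs0.ne'
  have hsy : 0 < s * y := by positivity
  have hqy := aux_q_pos hsy
  set u := (Real.exp (s * y) - 1) / (Real.exp s - 1) with hu
  set v := q (s * y) / q s with hv
  have hv0 : 0 < v := by positivity
  have hvu : v ≤ u := by
    rw [hv, hu, div_le_div_iff₀ hq hE]
    have := aux_conv hsy.le (by nlinarith) hs0
    unfold q
    nlinarith
  have hul : (c + 3) / (2 * c) ≤ u := by
    rw [hu, le_div_iff₀ hE]
    have h1 : Real.exp s * (1 - s * (1 - y)) ≤ Real.exp (s * y) := by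
      have : s * y = s + (- (s * (1 - y))) := by ring
      rw [this, Real.exp_add]
      apply mul_le_mul_of_nonneg_left _ (Real.exp_pos s).le
      have := Real.add_one_le_exp (-(s * (1 - y)))
      linarith
    have h2 : s * (1 - y) = q s / (Real.exp s - 1) * ((c - 3) / (2 * c)) := by
      have : Qf s = s * (Real.exp s - 1) / q s := by rw [← hQm]; field_simp
      rw [hy, this]; field_simp; ring
    have h3 : Real.exp s * (q s / (Real.exp s - 1)) ≤ Real.exp s - 1 := by
      rw [← mul_div_assoc, div_le_iff₀ hE]; unfold q; nlinarith
    have h4 : 0 ≤ (c - 3) / (2 * c) := div_nonneg (by linarith) (by positivity)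
    have h5 : (c + 3) / (2 * c) = 1 - (c - 3) / (2 * c) := by field_simp; ring
    have h6 := mul_le_mul_of_nonneg_right h3 h4
    rw [h5]
    rw [h2] at h1
    nlinarith
  have hid : s * (3 / (2 * Qf s * c ^ 2)) * (Real.exp (s * y) - 1) / q s / (3 + v)
      = 3 / (2 * c ^ 2) * (u / (3 + v)) := by
    have : Qf s = s * (Real.exp s - 1) / q s := by rw [← hQm]; field_simp
    rw [hu, this]; field_simp
  rw [hid]
  apply mul_le_mul_of_nonneg_left _ (by positivity)
  rw [div_le_div_iff₀ (by positivity) (by positivity)]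
  rw [div_le_iff₀ (by positivity)] at hul
  nlinarith

/-- the bound on the last logarithmic derivative -/
lemma aux_C {c Q : ℝ} (hQ : 5 ≤ Q) (hc : 3 < c) :
    (Q * (1 + c) ^ (Q - 1) + Q * (c / 3 - 1) ^ (Q - 1)) /
      ((1 + c) ^ Q + 3 * (c / 3 - 1) ^ Q) ≤
    Q / (1 + c) + 20 * (c - 3) ^ 4 / (81 * (1 + c) ^ 6) := by
  have hc1 : 0 < 1 + c := by linarith
  obtain ⟨r, hr⟩ : ∃ r, r = (c - 3) / (3 * (1 + c)) := ⟨_, rfl⟩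
  have hr0 : 0 < r := by rw [hr]; exact div_pos (by linarith) (by positivity)
  have hr3 : r * 3 ≤ 1 := by
    rw [hr, div_mul_eq_mul_div, div_le_one (by positivity)]; linarith
  have hcr : c / 3 - 1 = r * (1 + c) := by rw [hr]; field_simp
  have e1 : (1 + c) ^ Q = (1 + c) ^ (Q - 1) * (1 + c) := by
    rw [← Real.rpow_add_one hc1.ne']; ring_nf
  have e2 : r ^ Q = r ^ (Q - 1) * r := by
    rw [← Real.rpow_add_one hr0.ne']; ring_nf
  rw [hcr, Real.mul_rpow hr0.le hc1.le, Real.mul_rpow hr0.le hc1.le, e1, e2]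
  have hX : 0 < (1 + c) ^ (Q - 1) := Real.rpow_pos_of_pos hc1 _
  have hR : 0 < r ^ (Q - 1) := Real.rpow_pos_of_pos hr0 _
  have hQR : Q * r ^ (Q - 1) ≤ 5 * r ^ 4 := by
    have e3 : r ^ (Q - 1) = r ^ (Q - 5) * r ^ 4 := by
      rw [← Real.rpow_natCast r 4, ← Real.rpow_add hr0]; norm_num; ring_nf
    have h1 : r ^ (Q - 5) ≤ 1 / (1 + (Q - 5)) := by
      have hb := one_add_mul_self_le_rpow_one_add (s := 2) (by norm_num) (p := Q - 5 + 1) (by linarith)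
      have h2 : r ^ (Q - 5) ≤ (1 / 3 : ℝ) ^ (Q - 5) :=
        Real.rpow_le_rpow hr0.le (by linarith) (by linarith)
      have h3 : (1 / 3 : ℝ) ^ (Q - 5) = 1 / (3 : ℝ) ^ (Q - 5) := by
        rw [Real.div_rpow (by norm_num) (by norm_num), Real.one_rpow]
      have h4 : (1 + 2 : ℝ) ^ (Q - 5 + 1) = 3 ^ (Q - 5) * 3 := by
        rw [Real.rpow_add_one (by norm_num)]; norm_num
      rw [h3] at h2
      rw [h4] at hb
      refine h2.trans ?_
      apply one_div_le_one_div_of_le (by linarith)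
      have h5 : (1 : ℝ) + (Q - 5) * 1 ≤ 3 ^ (Q - 5) := by
        have h6 := Real.add_one_le_exp (Q - 5)
        have h7 : Real.exp (Q - 5) ≤ 3 ^ (Q - 5) := by
          rw [← Real.exp_one_rpow]
          exact Real.rpow_le_rpow (Real.exp_pos _).le
            (by have := Real.exp_one_lt_d9; linarith) (by linarith)
        linarith
      linarith
    have h2 : Q * r ^ (Q - 5) ≤ 5 := by
      rw [le_div_iff₀ (by linarith)] at h1
      have : 0 < r ^ (Q - 5) := Real.rpow_pos_of_pos hr0 _
      nlinarith
    rw [e3, ← mul_assoc]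
    exact mul_le_mul_of_nonneg_right h2 (by positivity)
  set X := (1 + c) ^ (Q - 1)
  set R := r ^ (Q - 1)
  have e4 : (Q * X + Q * (R * X)) / (X * (1 + c) + 3 * (R * r * (X * (1 + c))))
      = (Q + Q * R) / (1 + 3 * r * R) / (1 + c) := by
    field_simp
  have h13 : 1 - 3 * r = 4 / (1 + c) := by rw [hr]; field_simp; ring
  have e5 : Q / (1 + c) + 20 * (c - 3) ^ 4 / (81 * (1 + c) ^ 6)
      = (Q + 5 * r ^ 4 * (1 - 3 * r)) / (1 + c) := by
    rw [h13, hr]; field_simp; ring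
  rw [e4, e5]
  apply div_le_div_of_nonneg_right _ hc1.le
  rw [div_le_iff₀ (by positivity)]
  have h1 : 0 ≤ 1 - 3 * r := by linarith
  have h2 := mul_le_mul_of_nonneg_right hQR h1
  have h3 : 0 ≤ 5 * r ^ 4 * (1 - 3 * r) * (3 * r * R) := by positivity
  nlinarith

lemma aux_poly {c d : ℝ} (hc : 3 < c) (hd0 : 0 ≤ d) (hd : d ≤ (c - 3) / 30) :
    20 * (c - 3) ^ 4 / (81 * (1 + c) ^ 6) <
    (c ^ 2 - 6 * c - 3) / (2 * c ^ 2 * (1 + c) * (1 + c - d))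
      + 3 / (2 * c ^ 2) * ((c + 3) / (7 * c + 3)) := by
  obtain ⟨h, rfl⟩ : ∃ h, c = 3 + h := ⟨c - 3, by ring⟩
  have hh : 0 < h := by linarith
  have hden : 0 < 1 + (3 + h) - d := by linarith
  rcases le_total 0 ((3 + h) ^ 2 - 6 * (3 + h) - 3) with hn | hn
  · have : ((3 + h) ^ 2 - 6 * (3 + h) - 3) / (2 * (3 + h) ^ 2 * (1 + (3 + h)) * (1 + (3 + h)))
       ≤ ((3 + h) ^ 2 - 6 * (3 + h) - 3) / (2 * (3 + h) ^ 2 * (1 + (3 + h)) * (1 + (3 + h) - d)) := by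
      apply div_le_div_of_nonneg_left hn (by positivity)
      apply mul_le_mul_of_nonneg_left _ (by positivity)
      linarith
    refine lt_of_lt_of_le ?_ (add_le_add_left this _)
    rw [← sub_pos]
    have e : ((3 + h) ^ 2 - 6 * (3 + h) - 3) / (2 * (3 + h) ^ 2 * (1 + (3 + h)) * (1 + (3 + h)))
      + 3 / (2 * (3 + h) ^ 2) * (((3 + h) + 3) / (7 * (3 + h) + 3))
      - 20 * ((3 + h) - 3) ^ 4 / (81 * (1 + (3 + h)) ^ 6) =
      (81 * (1 + (3 + h)) ^ 4 * (((3 + h) ^ 2 - 6 * (3 + h) - 3) * (7 * (3 + h) + 3)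
        + 3 * (h + 6) * (4 + h) ^ 2) - 40 * h ^ 4 * (3 + h) ^ 2 * (7 * (3 + h) + 3))
       / (162 * (3 + h) ^ 2 * (4 + h) ^ 6 * (7 * (3 + h) + 3)) := by
      field_simp
      ring
    rw [e]
    apply div_pos _ (by positivity)
    ring_nf
    positivity
  · have : ((3 + h) ^ 2 - 6 * (3 + h) - 3) / (2 * (3 + h) ^ 2 * (1 + (3 + h)) * (4 + 29 * h / 30))
       ≤ ((3 + h) ^ 2 - 6 * (3 + h) - 3) / (2 * (3 + h) ^ 2 * (1 + (3 + h)) * (1 + (3 + h) - d)) := by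
      rw [← neg_le_neg_iff, ← neg_div, ← neg_div]
      apply div_le_div_of_nonneg_left (by linarith) (by positivity)
      apply mul_le_mul_of_nonneg_left _ (by positivity)
      linarith
    refine lt_of_lt_of_le ?_ (add_le_add_left this _)
    rw [← sub_pos]
    have e : ((3 + h) ^ 2 - 6 * (3 + h) - 3) / (2 * (3 + h) ^ 2 * (1 + (3 + h)) * (4 + 29 * h / 30))
      + 3 / (2 * (3 + h) ^ 2) * (((3 + h) + 3) / (7 * (3 + h) + 3))
      - 20 * ((3 + h) - 3) ^ 4 / (81 * (1 + (3 + h)) ^ 6) =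
      (81 * (4 + h) ^ 5 * (((3 + h) ^ 2 - 6 * (3 + h) - 3) * (7 * (3 + h) + 3)
        + 3 * (h + 6) * (4 + h) * (4 + 29 * h / 30))
         - 40 * h ^ 4 * (3 + h) ^ 2 * (7 * (3 + h) + 3) * (4 + 29 * h / 30))
       / (162 * (3 + h) ^ 2 * (4 + h) ^ 6 * (4 + 29 * h / 30) * (7 * (3 + h) + 3)) := by
      field_simp
      ring
    rw [e]
    apply div_pos _ (by positivity)
    ring_nf
    positivity

theorem stmt19 (s : ℝ) (hs : 5 ≤ s) :
    StrictAntiOn (fun c => OPTL 1 (1 + 3*(1/c)/(2*Qf s) - 1/(2*Qf s)) c s)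
      (Set.Ici (3:ℝ)) := by
  have hs0 : 0 < s := by linarith
  have hq := aux_q_pos hs0
  have hQ := aux_Q_gt hs0
  have hQ5 : 5 ≤ Qf s := by linarith
  have hQ0 : 0 < Qf s := by linarith
  obtain ⟨Y, hY⟩ : ∃ Y : ℝ → ℝ, Y = fun c => 1 + 3*(1/c)/(2*Qf s) - 1/(2*Qf s) := ⟨_, rfl⟩
  have hYe : ∀ c, 3 ≤ c → Y c = 1 - (c - 3) / (2 * Qf s * c) := by
    intro c hc
    have : c ≠ 0 := by linarith
    rw [hY]; field_simp; ring
  have hY0 : ∀ c, 3 ≤ c → 0 < Y c := by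
    intro c hc
    have hc0 : 0 < c := by linarith
    rw [hYe c hc, sub_pos, div_lt_one (by positivity)]
    nlinarith
  have hYd : ∀ c, 3 ≤ c → HasDerivAt Y (-(3 / (2 * Qf s * c ^ 2))) c := by
    intro c hc
    have hc0 : c ≠ 0 := by linarith
    have h := ((((hasDerivAt_inv hc0).const_mul 3).div_const (2 * Qf s)).const_add 1).sub_const
      (1/(2*Qf s))
    rw [hY]
    have e : (fun c : ℝ => 1 + 3*(1/c)/(2*Qf s) - 1/(2*Qf s))
        = fun x => 1 + 3 * x⁻¹ / (2 * Qf s) - 1 / (2 * Qf s) := by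
      funext x; rw [one_div x]
    rw [e]
    refine h.congr_deriv ?_
    field_simp
  obtain ⟨g, hg⟩ : ∃ g : ℝ → ℝ, g = fun c => Real.log (3 + q (s * Y c) / q s)
    - Qf s * Real.log (Y c + c)
    + Real.log ((1 + c) ^ Qf s + 3 * (c / 3 - 1) ^ Qf s) := ⟨_, rfl⟩
  have hApos : ∀ c, 3 ≤ c → 0 < 3 + q (s * Y c) / q s := by
    intro c hc
    have := aux_q_pos (mul_pos hs0 (hY0 c hc))
    positivity
  have hCpos : ∀ c : ℝ, 3 ≤ c → 0 < (1 + c) ^ Qf s + 3 * (c / 3 - 1) ^ Qf s := by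
    intro c hc
    have h1 : 0 < (1 + c) ^ Qf s := Real.rpow_pos_of_pos (by linarith) _
    have h2 : 0 ≤ (c / 3 - 1) ^ Qf s := Real.rpow_nonneg (by linarith) _
    linarith
  have hF : ∀ c, 3 ≤ c → OPTL 1 (Y c) c s = Real.exp (g c) := by
    intro c hc
    have hyc : 0 < Y c + c := by linarith [hY0 c hc]
    rw [hg]
    simp only
    rw [Real.exp_add, Real.exp_sub, Real.exp_log (hApos c hc), Real.exp_log (hCpos c hc)]
    unfold OPTL
    have : |1 - c / 3| = c / 3 - 1 := by rw [abs_of_nonpos (by linarith)]; ring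
    rw [this, mul_one, one_mul, mul_div_assoc, div_self hq.ne', mul_one, one_div,
      Real.inv_rpow hyc.le, Real.rpow_def_of_pos hyc, mul_comm (Real.log _), div_eq_mul_inv (3 + _)]
  have hgd : ∀ c, 3 ≤ c → HasDerivAt g
      (- (s * (3 / (2 * Qf s * c ^ 2)) * (Real.exp (s * Y c) - 1) / q s / (3 + q (s * Y c) / q s))
       - Qf s * ((1 - 3 / (2 * Qf s * c ^ 2)) / (Y c + c))
       + (Qf s * (1 + c) ^ (Qf s - 1) + Qf s * (c / 3 - 1) ^ (Qf s - 1)) /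
      ((1 + c) ^ Qf s + 3 * (c / 3 - 1) ^ Qf s)) c := by
    intro c hc
    have hyc : 0 < Y c + c := by linarith [hY0 c hc]
    have hy := hYd c hc
    have hsy := hy.const_mul s
    have hA : HasDerivAt (fun c => 3 + q (s * Y c) / q s) _ c :=
      (((hsy.exp.sub hsy).sub_const 1).div_const (q s)).const_add 3
    have hA' := hA.log (hApos c hc).ne'
    have hB' := ((hy.add (hasDerivAt_id c)).log hyc.ne').const_mul (Qf s)
    have hC : HasDerivAt (fun c : ℝ => (1 + c) ^ Qf s + 3 * (c / 3 - 1) ^ Qf s) _ c :=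
      (((hasDerivAt_id c).const_add 1).rpow_const (p := Qf s) (Or.inr (by linarith))).add
      (((((hasDerivAt_id c).div_const 3).sub_const 1).rpow_const (p := Qf s)
        (Or.inr (by linarith))).const_mul 3)
    have hC' := hC.log (hCpos c hc).ne'
    have := (hA'.sub hB').add hC'
    rw [hg]
    refine this.congr_deriv ?_
    simp only [id]
    congr 1
    · congr 1
      · rw [← neg_div]
        congr 1
        ring
      · congr 2
        ring
    · congr 1
      ring
  have hga : StrictAntiOn g (Set.Ici 3) := by
    apply strictAntiOn_of_deriv_neg (convex_Ici 3)
    · intro c hc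
      exact (hgd c hc).continuousAt.continuousWithinAt
    · intro c hc
      rw [interior_Ici] at hc
      have hc : 3 < c := hc
      rw [(hgd c hc.le).deriv]
      have h1 := aux_A hs hc.le (hYe c hc.le)
      have h2 := aux_C hQ5 hc
      have hc0 : 0 < c := by linarith
      obtain ⟨d, hd⟩ : ∃ d, d = (c - 3) / (2 * Qf s * c) := ⟨_, rfl⟩
      have hd0 : 0 ≤ d := by rw [hd]; exact div_nonneg (by linarith) (by positivity)
      have hd1 : d ≤ (c - 3) / 30 := by
        rw [hd]; apply div_le_div_of_nonneg_left (by linarith) (by norm_num)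
        nlinarith
      have h3 := aux_poly hc hd0 hd1
      have hden : 0 < 1 + c - d := by linarith
      have h4 : Qf s * ((1 - 3 / (2 * Qf s * c ^ 2)) / (Y c + c)) =
         Qf s / (1 + c) + (c ^ 2 - 6 * c - 3) / (2 * c ^ 2 * (1 + c) * (1 + c - d)) := by
        have e : Y c + c = 1 + c - d := by rw [hYe c hc.le, hd]; ring
        rw [e]
        have hdd : 2 * Qf s * c * d = c - 3 := by rw [hd]; field_simp
        have h1c : 1 + c ≠ 0 := by linarith
        field_simp
        linear_combination c * hdd
      rw [h4]
      linarith
  intro a ha b hb hab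
  have := Real.exp_lt_exp.2 (hga ha hb hab)
  rw [← hF a ha, ← hF b hb, hY] at this
  exact this
end
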